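/- Let q ≥ 2 be an integer and d a positive divisor of q+1. Then 120·d · Σ_{i=0}^{q} Σ_{j=0}^{q} Σ_{k=0}^{q} min{ C(s_d(i,j,k)+3, 3), C(s_d(j,k,i)+3, 3) } = d·(2q⁶ + q⁵ − 20q⁴ − 25q³ + 138q² − 96q) + 10(d−1)(q+1)(2q² − 5q + 5 − d). (In the paper, this sum is the number N_2(T) of effective divisors aP + bQ + cR having basepoints at two specified points of a Hermitian triangle T = {P,Q,R} of type d.) -/

import Mathlib

/-!
Multiply everything by `6` and write `g s = (s+3)(s+2)(s+1)`, so that `6 * ch3 s = g s` for all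
`s ≥ -3`, a range containing every value of `sFn` that occurs. As `ch3` is monotone, the minimum of the
two binomials is `ch3` of the smaller argument. Terms with `j = 0` or `k = 0` vanish, because then one
of the two arguments is negative and its binomial is `0`.

For `j, k ≥ 1`, put `M = max j k`. The floor in `sFn` only contributes `0` or `-1` (`sFn_eq`), and
comparing the two arguments shows that, as a function of `i`, six times the minimum is a step function
with a single drop (`six_min_of_ne`, `six_min_diag`). The corrections `ε` leave the minimum
unchanged except on the diagonal `i = j = k` with `d ∤ j`, where it rises from `q - 3 - j` to
`q - 2 - j`. Summing over `i` gives a function of `(j, k)` that depends on `M` and on whether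
`|j - k|` is `0`, `1` or larger; summing over the gnomons `max j k = M` (`sum_square`) leaves a
single sum over `M` of a polynomial in `q` and `M`, minus the sum of `3(q-M)(q-M-1)` over the
multiples `M ≤ q` of `d`. Both are evaluated by telescoping.
-/

/-- ε_d(i,j): the correction term in the discrepancy function of a Hermitian
triangle of type `d`. -/
def epsFn (q d i j : ℤ) : ℤ :=
  if ¬ d ∣ i ∧ j = i then 1
  else if ¬ d ∣ i ∧ (j = i + 1 ∨ (i = q ∧ j = 0)) then -1
  else 0

/-- σ_d(i,j): the two-point discrepancy function of a Hermitian triangle of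
type `d`, for 0 ≤ i,j ≤ q. -/
def sigmaFn (q d i j : ℤ) : ℤ :=
  if j = 0 then epsFn q d i j
  else (q - 2) * (q + 1) - j * q + (if i < j then q + 1 else 0) + epsFn q d i j

/-- s_d(i,j,k) = ⌊(σ_d(i,j) − k − 1)/(q+1)⌋. -/
def sFn (q d i j k : ℤ) : ℤ := Int.fdiv (sigmaFn q d i j - k - 1) (q + 1)

/-- C(s+3, 3) as an integer (equal to 0 when s+3 < 3). -/
def ch3 (s : ℤ) : ℤ := ((s + 3).toNat.choose 3 : ℤ)

/-! ### One-variable sums over integer intervals -/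

lemma icc_succ_sum (f : ℤ → ℤ) (a n : ℤ) (h : a ≤ n + 1) :
    ∑ x ∈ Finset.Icc a (n + 1), f x = ∑ x ∈ Finset.Icc a n, f x + f (n + 1) := by
  have : Finset.Icc a (n + 1) = insert (n + 1) (Finset.Icc a n) := by
    ext x; simp only [Finset.mem_Icc, Finset.mem_insert]; omega
  rw [this, Finset.sum_insert (by simp)]; ring

lemma sum_telescope (F f : ℤ → ℤ) (h : ∀ x, F x - F (x - 1) = f x) (n : ℤ) (hn : 0 ≤ n) :
    ∑ x ∈ Finset.Icc 1 n, f x = F n - F 0 := by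
  induction n, hn using Int.leInduction with
  | base => simp
  | succ n hn ih =>
    rw [icc_succ_sum f 1 n (by omega), ih, ← h (n + 1)]
    simp

/-- Summation over a square, organised by gnomons: `M` is the larger of the two coordinates. -/
lemma sum_square (H : ℤ → ℤ → ℤ) (n : ℤ) (hn : 0 ≤ n) :
    ∑ j ∈ Finset.Icc 1 n, ∑ k ∈ Finset.Icc 1 n, H j k
      = ∑ M ∈ Finset.Icc 1 n, (H M M + ∑ k ∈ Finset.Icc 1 (M - 1), (H M k + H k M)) := by
  induction n, hn using Int.leInduction with
  | base => simp
  | succ n hn ih =>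
    simp_rw [fun f => icc_succ_sum f 1 n (by omega)]
    rw [← ih, show n + 1 - 1 = n by ring, Finset.sum_add_distrib, Finset.sum_add_distrib]
    ring

lemma sum_step (q T a b : ℤ) (h0 : 0 ≤ T) (h1 : T ≤ q + 1) :
    ∑ i ∈ Finset.Icc 0 q, (if i < T then a else b) = T * a + (q + 1 - T) * b := by
  rw [Finset.sum_ite, Finset.sum_const, Finset.sum_const]
  have e1 : (Finset.Icc 0 q).filter (fun i => i < T) = Finset.Ico 0 T := by
    ext x; simp only [Finset.mem_filter, Finset.mem_Icc, Finset.mem_Ico]; omega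
  have e2 : (Finset.Icc 0 q).filter (fun i => ¬ i < T) = Finset.Icc T q := by
    ext x; simp only [Finset.mem_filter, Finset.mem_Icc]; omega
  rw [e1, e2, Int.card_Ico, Int.card_Icc, nsmul_eq_mul, nsmul_eq_mul,
    Int.toNat_of_nonneg (by omega), Int.toNat_of_nonneg (by omega)]
  ring

lemma sum_multiples (d n : ℤ) (hd : 0 < d) (p : ℤ → ℤ) :
    ∑ M ∈ Finset.Icc 1 (d * n), (if d ∣ M then p M else 0) = ∑ t ∈ Finset.Icc 1 n, p (d * t) := by
  rw [← Finset.sum_filter]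
  symm
  apply Finset.sum_bij (fun t _ => d * t)
  · intro t ht
    simp only [Finset.mem_Icc, Finset.mem_filter] at ht ⊢
    exact ⟨⟨by nlinarith, by nlinarith⟩, dvd_mul_right d t⟩
  · intro a _ b _ h
    exact mul_left_cancel₀ hd.ne' h
  · intro b hb
    simp only [Finset.mem_Icc, Finset.mem_filter] at hb
    obtain ⟨⟨h1, h2⟩, t, rfl⟩ := hb
    refine ⟨t, Finset.mem_Icc.2 ⟨?_, le_of_mul_le_mul_left h2 hd⟩, rfl⟩
    by_contra! h
    nlinarith
  · intros; rfl

/-! ### The binomials and the floor -/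

/-- The cubic polynomial `6 * C(s + 3, 3)`. -/
def gPoly (s : ℤ) : ℤ := (s + 3) * (s + 2) * (s + 1)

lemma six_ch3 (s : ℤ) (h : -3 ≤ s) : 6 * ch3 s = gPoly s := by
  obtain ⟨n, hn⟩ := Int.eq_ofNat_of_zero_le (by omega : 0 ≤ s + 3)
  obtain rfl : s = n - 3 := by omega
  have key : ∀ n : ℕ, (6 : ℤ) * (n.choose 3 : ℤ) = n * (n - 1) * (n - 2) := by
    intro n
    have h2 : ∀ n : ℕ, (2 : ℤ) * (n.choose 2 : ℤ) = n * (n - 1) := by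
      intro n
      induction n with
      | zero => simp
      | succ n ih => rw [Nat.choose_succ_succ' n 1]; push_cast; rw [Nat.choose_one_right]; linarith
    induction n with
    | zero => simp
    | succ n ih =>
      rw [Nat.choose_succ_succ' n 2]; push_cast; linarith [h2 n]
  simp only [ch3, gPoly, sub_add_cancel, Int.toNat_natCast, key]
  ring

lemma ch3_mono : Monotone ch3 := fun a b h => by
  unfold ch3
  exact_mod_cast Nat.choose_le_choose 3 (Int.toNat_le_toNat (by omega))

lemma ch3_nonneg (s : ℤ) : 0 ≤ ch3 s := by unfold ch3; positivity

lemma ch3_neg (s : ℤ) (h : s < 0) : ch3 s = 0 := by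
  unfold ch3
  rw [Nat.choose_eq_zero_of_lt (by omega)]; rfl

lemma six_min (s t m : ℤ) (hm : min s t = m) (h : -3 ≤ m) :
    6 * min (ch3 s) (ch3 t) = gPoly m := by
  rw [← ch3_mono.map_min, hm, six_ch3 m h]

lemma sFn_zero (q d i k : ℤ) (hq : 2 ≤ q) (hk : 0 ≤ k) :
    sFn q d i 0 k < 0 := by
  -- `ε = 1` would require `i = 0` and `d ∤ 0`.
  have he : epsFn q d i 0 ≤ 0 := by
    unfold epsFn
    split_ifs with h1 h2
    · exact absurd (h1.2 ▸ dvd_zero d) h1.1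
    · norm_num
    · norm_num
  unfold sFn sigmaFn
  rw [if_pos rfl, Int.fdiv_eq_ediv_of_nonneg _ (by omega)]
  exact Int.ediv_neg_of_neg_of_pos (by omega) (by omega)

/-- For `j ≥ 1` the floor reduces to a comparison of `k` with `j + ε_d(i,j)`. -/
lemma sFn_eq (q d i j k : ℤ) (hj : 1 ≤ j) (hjq : j ≤ q) (hk : 0 ≤ k)
    (hkq : k ≤ q) :
    sFn q d i j k = q - 2 - j + (if i < j then 1 else 0)
      - (if j + epsFn q d i j ≤ k then 1 else 0) := by
  have he : -1 ≤ epsFn q d i j ∧ epsFn q d i j ≤ 1 := by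
    unfold epsFn; split_ifs <;> norm_num
  unfold sFn sigmaFn
  rw [if_neg (by omega), Int.fdiv_eq_ediv_of_nonneg _ (by omega)]
  generalize epsFn q d i j = e at *
  apply le_antisymm
  · apply Int.le_of_lt_add_one
    rw [Int.ediv_lt_iff_lt_mul (by omega)]
    split_ifs <;> linarith
  · rw [Int.le_ediv_iff_mul_le (by omega)]
    split_ifs <;> linarith

/-! ### The minimum as a step function of the first index -/

/-- Off the diagonal, with `M = max j k`, the minimum drops once, at `i = M` (or at `i = M - 1` if
`|j - k| = 1`), and does not depend on `d`. -/
lemma six_min_of_ne (q d i j k M : ℤ) (hi : 0 ≤ i) (hiq : i ≤ q) (hj : 1 ≤ j)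
    (hjq : j ≤ q) (hk : 1 ≤ k) (hkq : k ≤ q) (hjk : j ≠ k) (hM : M = max j k) :
    6 * min (ch3 (sFn q d i j k)) (ch3 (sFn q d j k i))
      = if i < M - (if min j k = M - 1 then 1 else 0) then gPoly (q - 1 - M)
        else gPoly (q - 2 - M) := by
  rw [← apply_ite gPoly]
  apply six_min
  · rw [sFn_eq q d i j k hj hjq (by omega) hkq,
      sFn_eq q d j k i hk hkq hi hiq]
    unfold epsFn
    by_cases h1 : d ∣ i <;> by_cases h2 : d ∣ j <;>
      simp only [h1, h2, not_true_eq_false, not_false_eq_true, true_and, false_and, if_false] <;>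
      grind (splits := 40)
  · split_ifs <;> omega

lemma six_min_diag (q d i j : ℤ) (hi : 0 ≤ i) (hiq : i ≤ q) (hj : 1 ≤ j) (hjq : j ≤ q) :
    6 * min (ch3 (sFn q d i j j)) (ch3 (sFn q d j j i))
      = (if i < j then gPoly (q - 2 - j) else gPoly (q - 3 - j))
        + if i = j then (if d ∣ j then 0 else 3 * (q - j) * (q - j - 1)) else 0 := by
  have key : 6 * min (ch3 (sFn q d i j j)) (ch3 (sFn q d j j i))
      = gPoly (if i < j ∨ (i = j ∧ ¬ d ∣ j) then q - 2 - j else q - 3 - j) := by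
    apply six_min
    · rw [sFn_eq q d i j j hj hjq (by omega) hjq,
        sFn_eq q d j j i hj hjq hi hiq]
      unfold epsFn
      by_cases h1 : d ∣ i <;> by_cases h2 : d ∣ j <;>
        simp only [h1, h2, not_true_eq_false, not_false_eq_true, true_and, false_and, and_true,
          and_false, or_false, if_false] <;>
        grind
    · split_ifs <;> omega
  rw [key]
  have hg : gPoly (q - 2 - j) = gPoly (q - 3 - j) + 3 * (q - j) * (q - j - 1) := by
    unfold gPoly; ring
  by_cases h1 : i < j
  · simp [h1, h1.ne]
  · by_cases h2 : i = j
    · by_cases h3 : d ∣ j <;> simp [h2, h3, hg]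
    · simp [h1, h2]

/-! ### Summation over the first index, then over the square -/

/-- Six times the sum of the minimum over `i`. -/
noncomputable def rowSum (q d j k : ℤ) : ℤ :=
  ∑ i ∈ Finset.Icc (0 : ℤ) q, 6 * min (ch3 (sFn q d i j k)) (ch3 (sFn q d j k i))

lemma rowSum_of_ne (q d j k M : ℤ) (hj : 1 ≤ j) (hjq : j ≤ q) (hk : 1 ≤ k)
    (hkq : k ≤ q) (hjk : j ≠ k) (hM : M = max j k) :
    rowSum q d j k = M * gPoly (q - 1 - M) + (q + 1 - M) * gPoly (q - 2 - M)
      - if min j k = M - 1 then 3 * (q - M + 1) * (q - M) else 0 := by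
  unfold rowSum
  rw [Finset.sum_congr rfl fun i hi => six_min_of_ne q d i j k M (Finset.mem_Icc.1 hi).1
    (Finset.mem_Icc.1 hi).2 hj hjq hk hkq hjk hM]
  rw [sum_step _ _ _ _ (by split_ifs <;> omega) (by split_ifs <;> omega)]
  unfold gPoly
  split_ifs <;> ring

lemma rowSum_diag (q d j : ℤ) (hj : 1 ≤ j) (hjq : j ≤ q) :
    rowSum q d j j = j * gPoly (q - 2 - j) + (q + 1 - j) * gPoly (q - 3 - j)
      + if d ∣ j then 0 else 3 * (q - j) * (q - j - 1) := by
  unfold rowSum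
  rw [Finset.sum_congr rfl fun i hi => six_min_diag q d i j (Finset.mem_Icc.1 hi).1
    (Finset.mem_Icc.1 hi).2 hj hjq]
  rw [Finset.sum_add_distrib, sum_step _ _ _ _ (by omega) (by omega), Finset.sum_ite_eq',
    if_pos (Finset.mem_Icc.2 ⟨by omega, hjq⟩)]

/-- The contribution of all pairs `(j, k)` with `max j k = M`. The term at `M = 1` compensates for
the absence of pairs with `|j - k| = 1` in that gnomon. -/
lemma gnomon (q d M : ℤ) (hM : 1 ≤ M) (hMq : M ≤ q) :
    rowSum q d M M + ∑ k ∈ Finset.Icc 1 (M - 1), (rowSum q d M k + rowSum q d k M)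
      = (2 * (M - 1) * (M * gPoly (q - 1 - M) + (q + 1 - M) * gPoly (q - 2 - M))
          - 2 * (3 * (q - M + 1) * (q - M))
          + M * gPoly (q - 2 - M) + (q + 1 - M) * gPoly (q - 3 - M)
          + 3 * (q - M) * (q - M - 1))
        + (if M = 1 then 6 * q * (q - 1) else 0)
        - (if d ∣ M then 3 * (q - M) * (q - M - 1) else 0) := by
  rw [rowSum_diag q d M hM hMq]
  have h : ∀ k ∈ Finset.Icc 1 (M - 1), rowSum q d M k + rowSum q d k M
      = 2 * (M * gPoly (q - 1 - M) + (q + 1 - M) * gPoly (q - 2 - M))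
        - if k = M - 1 then 2 * (3 * (q - M + 1) * (q - M)) else 0 := by
    intro k hk
    rw [Finset.mem_Icc] at hk
    rw [rowSum_of_ne q d M k M hM hMq hk.1 (by omega) (by omega) (by omega),
      rowSum_of_ne q d k M M hk.1 (by omega) hM hMq (by omega) (by omega),
      min_eq_right (by omega : k ≤ M), min_eq_left (by omega : k ≤ M)]
    split_ifs <;> ring
  rw [Finset.sum_congr rfl h, Finset.sum_sub_distrib, Finset.sum_ite_eq', Finset.sum_const,
    Int.card_Icc, nsmul_eq_mul, Int.toNat_of_nonneg (by omega)]
  by_cases h1 : M = 1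
  · subst h1
    simp only [gPoly]
    split_ifs <;> simp_all <;> ring
  · rw [if_pos (Finset.mem_Icc.2 ⟨by omega, le_rfl⟩), if_neg h1]
    split_ifs <;> ring

/-! ### Evaluation -/

/-- Six times the triple sum, rearranged; indices `j = 0` and `k = 0` contribute nothing. -/
lemma six_total (q d : ℤ) (hq : 2 ≤ q) :
    6 * ∑ i ∈ Finset.Icc (0 : ℤ) q, ∑ j ∈ Finset.Icc (0 : ℤ) q, ∑ k ∈ Finset.Icc (0 : ℤ) q,
        min (ch3 (sFn q d i j k)) (ch3 (sFn q d j k i))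
      = ∑ j ∈ Finset.Icc 1 q, ∑ k ∈ Finset.Icc 1 q, rowSum q d j k := by
  have hsub : Finset.Icc (1 : ℤ) q ⊆ Finset.Icc 0 q := Finset.Icc_subset_Icc_left (by norm_num)
  have hz : ∀ x, x ∈ Finset.Icc (0 : ℤ) q → x ∉ Finset.Icc (1 : ℤ) q → x = 0 := by
    intro x h1 h2
    rw [Finset.mem_Icc] at h1 h2
    omega
  have hj : ∀ k ∈ Finset.Icc (0 : ℤ) q, rowSum q d 0 k = 0 := by
    intro k hk
    refine Finset.sum_eq_zero fun i _ => ?_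
    rw [ch3_neg _ (sFn_zero q d i k hq (Finset.mem_Icc.1 hk).1),
      min_eq_left (ch3_nonneg _), mul_zero]
  have hk : ∀ j ∈ Finset.Icc (0 : ℤ) q, rowSum q d j 0 = 0 := by
    intro j _
    refine Finset.sum_eq_zero fun i hi => ?_
    rw [ch3_neg (sFn q d j 0 i)
      (sFn_zero q d j i hq (Finset.mem_Icc.1 hi).1),
      min_eq_right (ch3_nonneg _), mul_zero]
  calc _ = ∑ j ∈ Finset.Icc 0 q, ∑ k ∈ Finset.Icc 0 q, rowSum q d j k := by
        rw [Finset.sum_comm, Finset.mul_sum]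
        refine Finset.sum_congr rfl fun j _ => ?_
        rw [Finset.sum_comm, Finset.mul_sum]
        refine Finset.sum_congr rfl fun k _ => ?_
        rw [Finset.mul_sum, rowSum]
    _ = ∑ j ∈ Finset.Icc 1 q, ∑ k ∈ Finset.Icc 0 q, rowSum q d j k := by
        refine (Finset.sum_subset hsub fun j h1 h2 => ?_).symm
        rw [hz j h1 h2]
        exact Finset.sum_eq_zero hj
    _ = _ := by
        refine Finset.sum_congr rfl fun j h => ?_
        refine (Finset.sum_subset hsub fun k h1 h2 => ?_).symm
        rw [hz k h1 h2]
        exact hk j (hsub h)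

/-- The gnomon sum without the divisibility correction. The telescoping primitive comes from
Faulhaber's formulas; the factor `20` clears its denominators. -/
lemma twenty_main (q : ℤ) (hq : 0 ≤ q) :
    ∑ M ∈ Finset.Icc 1 q,
      20 * (2 * (M - 1) * (M * gPoly (q - 1 - M) + (q + 1 - M) * gPoly (q - 2 - M))
          - 2 * (3 * (q - M + 1) * (q - M))
          + M * gPoly (q - 2 - M) + (q + 1 - M) * gPoly (q - 3 - M)
          + 3 * (q - M) * (q - M - 1))
      = 2 * q ^ 6 + q ^ 5 - 20 * q ^ 4 - 25 * q ^ 3 + 138 * q ^ 2 - 96 * q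
        - 120 * q * (q - 1) + 20 * q * (q - 1) * (q - 2) := by
  rw [sum_telescope (fun M => 20 * q ^ 4 * M ^ 2 - 40 * q ^ 3 * M ^ 3 - 10 * q ^ 3 * M ^ 2
    - 50 * q ^ 3 * M + 30 * q ^ 2 * M ^ 4 + 40 * q ^ 2 * M ^ 3 + 40 * q ^ 2 * M ^ 2
    - 10 * q ^ 2 * M - 8 * q * M ^ 5 - 45 * q * M ^ 4 - 10 * q * M ^ 3 + 25 * q * M ^ 2
    - 102 * q * M + 16 * M ^ 5 - 20 * M ^ 3 + 60 * M ^ 2 + 64 * M) _ ?_ q hq]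
  · ring
  · intro x
    simp only [gPoly]
    ring

/-- The divisibility correction, with `q + 1 = d * n`. The sum over multiples of `d` up to `q + 1` has
one extra term, at `M = q + 1`, whose value is `6`. -/
lemma twenty_multiples (q d n : ℤ) (hq : 0 ≤ q) (hd : 0 < d) (hn : q + 1 = d * n) :
    20 * ∑ M ∈ Finset.Icc 1 q, (if d ∣ M then 3 * (q - M) * (q - M - 1) else 0)
      = 60 * q ^ 2 * n - 60 * q * n ^ 2 * d - 60 * q * n * d - 60 * q * n + 20 * n ^ 3 * d ^ 2
        + 30 * n ^ 2 * d ^ 2 + 30 * n ^ 2 * d + 10 * n * d ^ 2 + 30 * n * d - 120 := by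
  have hn0 : 0 ≤ n := by
    by_contra! h
    nlinarith
  have h1 := icc_succ_sum (fun M => if d ∣ M then 3 * (q - M) * (q - M - 1) else 0) 1 q (by omega)
  have h2 := sum_multiples d n hd (fun M => 3 * (q - M) * (q - M - 1))
  have h3 := sum_telescope (fun x => 60 * q ^ 2 * x - 60 * q * x ^ 2 * d - 60 * q * x * d
    - 60 * q * x + 20 * x ^ 3 * d ^ 2 + 30 * x ^ 2 * d ^ 2 + 30 * x ^ 2 * d + 10 * x * d ^ 2
    + 30 * x * d) (fun t => 20 * (3 * (q - d * t) * (q - d * t - 1))) (fun x => by ring) n hn0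
  rw [← Finset.mul_sum, ← h2, ← hn, h1, if_pos ⟨n, hn⟩] at h3
  linear_combination h3

/-- The number of effective divisors with basepoints at two specified points:
120·d·N₂(T) = d·(2q⁶+q⁵−20q⁴−25q³+138q²−96q) + 10(d−1)(q+1)(2q²−5q+5−d). -/
theorem two_basepoint_count (q d : ℤ) (hq : 2 ≤ q) (hd : 0 < d) (hdvd : d ∣ q + 1) :
    120 * d * ∑ i ∈ Finset.Icc (0 : ℤ) q, ∑ j ∈ Finset.Icc (0 : ℤ) q, ∑ k ∈ Finset.Icc (0 : ℤ) q,
        min (ch3 (sFn q d i j k)) (ch3 (sFn q d j k i))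
      = d * (2 * q ^ 6 + q ^ 5 - 20 * q ^ 4 - 25 * q ^ 3 + 138 * q ^ 2 - 96 * q)
        + 10 * (d - 1) * (q + 1) * (2 * q ^ 2 - 5 * q + 5 - d) := by
  obtain ⟨n, hn⟩ := hdvd
  have h := six_total q d hq
  rw [sum_square _ q (by omega), Finset.sum_congr rfl fun M hM =>
    gnomon q d M (Finset.mem_Icc.1 hM).1 (Finset.mem_Icc.1 hM).2, Finset.sum_sub_distrib,
    Finset.sum_add_distrib, Finset.sum_ite_eq', if_pos (Finset.mem_Icc.2 ⟨le_rfl, by omega⟩)] at h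
  have h1 := twenty_main q (by omega)
  rw [← Finset.mul_sum] at h1
  have h2 := twenty_multiples q d n (by omega) hd hn
  obtain rfl : q = d * n - 1 := by linarith
  linear_combination 20 * d * h + d * h1 - d * h2
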